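/- For all real numbers D > 0 and g > 0, the symmetric 4×4 real matrix H with rows [−2(1/3+D), −(1/3+D), 2D, D], [−(1/3+D), −2(1/3+D), D, 2D], [2D, D, −2(8g/3+D), −(8g/3+D)], [D, 2D, −(8g/3+D), −2(8g/3+D)] is negative definite. -/

import Mathlib

open Matrix

/-- The Hessian matrix `H` arising in the second-moment analysis, with `D = 3/C(s)`
and `g = kγ`. -/
noncomputable def H (D g : ℝ) : Matrix (Fin 4) (Fin 4) ℝ :=
  !![-2*(1/3+D), -(1/3+D),    2*D,             D;
     -(1/3+D),   -2*(1/3+D),  D,               2*D;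
     2*D,        D,           -2*(8*g/3+D),    -(8*g/3+D);
     D,          2*D,         -(8*g/3+D),      -2*(8*g/3+D)]

/-- The matrix `H` is negative definite: it is symmetric and `xᵀ H x < 0` for every
nonzero vector `x`. -/
theorem stmt13 (D g : ℝ) (hD : 0 < D) (hg : 0 < g) :
    (H D g).IsHermitian ∧
    ∀ x : Fin 4 → ℝ, x ≠ 0 → x ⬝ᵥ ((H D g) *ᵥ x) < 0 := by
  constructor
  · ext i j
    fin_cases i <;> fin_cases j <;> simp [H]
  · intro x hx
    have key : x ⬝ᵥ ((H D g) *ᵥ x) =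
        -((1/3) * (x 0 ^ 2 + x 1 ^ 2 + (x 0 + x 1) ^ 2)
          + (8 * g / 3) * (x 2 ^ 2 + x 3 ^ 2 + (x 2 + x 3) ^ 2)
          + D * ((x 0 - x 2) ^ 2 + (x 1 - x 3) ^ 2 + (x 0 - x 2 + (x 1 - x 3)) ^ 2)) := by
      simp [H, dotProduct, mulVec, Fin.sum_univ_four]
      ring
    rw [key, neg_lt_zero]
    obtain ⟨i, hi⟩ := Function.ne_iff.mp hx
    have hi' : x i ≠ 0 := hi
    fin_cases i <;> simp only [Fin.zero_eta, Fin.mk_one, Fin.reduceFinMk] at hi' <;> positivity
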